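/- Suppose p > 0, k⊥ ≥ 0, ρ > 0 with (p − 1)² + k⊥² < 1, and set ρ₋ := 2p² − √(4p⁴ − p²(p² + k⊥²)²) and ρ₊ := 2p² + √(4p⁴ − p²(p² + k⊥²)²). Then 4p⁴ − p²(p² + k⊥²)² > 0 and 0 < ρ₋ < ρ₊, and: (i) if ρ < ρ₋ then T² − 4D > 0, T > 0 and D > 0 (two positive real roots: stable oscillation); (ii) if ρ₋ < ρ < ρ₊ then T² − 4D < 0 (non-real complex-conjugate roots: propagating instability); (iii) if ρ > ρ₊ then T² − 4D > 0, T < 0 and D > 0 (two negative real roots: Jeans instability). -/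

import Mathlib

/-!
Put `a = p²` and `b = (p² + k²)² / 4`. The circle condition says `p² + k² < 2p`, that is `b < a`.
The discriminant `T² - 4D` equals `4 (ρ₋ - ρ) (ρ₊ - ρ)` with `ρ± = 2a ± S` and `S² = 4a(a - b)`,
which gives its sign in each regime, while `D = (a - b)(a - b + 2ρ)` is always positive.
Finally `a - b < S < 2a`, because `(a - b)² < 4a(a - b) < 4a²`; hence `0 < ρ₋ < a + b < ρ₊`,
and `T = 2(a + b - ρ)` is positive below `ρ₋` and negative above `ρ₊`.
-/

/-- The trace `T(p,k⊥,ρ) = 2(p² + k⁴/4 − ρ)` of the two-component dispersion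
quadratic, with `k² = p² + k⊥²`. -/
noncomputable def dispT (p k ρ : ℝ) : ℝ := 2 * (p ^ 2 + (p ^ 2 + k ^ 2) ^ 2 / 4 - ρ)

/-- The determinant `D(p,k⊥,ρ) = (p² − k⁴/4)(p² − k⁴/4 + 2ρ)` of the two-component
dispersion quadratic, with `k² = p² + k⊥²`. -/
noncomputable def dispD (p k ρ : ℝ) : ℝ :=
  (p ^ 2 - (p ^ 2 + k ^ 2) ^ 2 / 4) * (p ^ 2 - (p ^ 2 + k ^ 2) ^ 2 / 4 + 2 * ρ)

/-- The inside-the-circle case of the stability classification Eq. (E9) for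
two-component wave dark matter: for `(p−1)² + k⊥² < 1` the boundaries
`ρ± = 2p² ± √(4p⁴ − p²(p²+k⊥²)²)` are well-defined and positive, and the density
regimes `ρ < ρ₋`, `ρ₋ < ρ < ρ₊`, `ρ₊ < ρ` give respectively stable oscillation,
propagating instability, and Jeans instability. -/
theorem two_component_stability_inside_circle
    (p k ρ : ℝ) (hp : 0 < p) (hk : 0 ≤ k) (hρ : 0 < ρ)
    (hcirc : (p - 1) ^ 2 + k ^ 2 < 1) :
    0 < 4 * p ^ 4 - p ^ 2 * (p ^ 2 + k ^ 2) ^ 2 ∧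
    0 < 2 * p ^ 2 - Real.sqrt (4 * p ^ 4 - p ^ 2 * (p ^ 2 + k ^ 2) ^ 2) ∧
    2 * p ^ 2 - Real.sqrt (4 * p ^ 4 - p ^ 2 * (p ^ 2 + k ^ 2) ^ 2) <
      2 * p ^ 2 + Real.sqrt (4 * p ^ 4 - p ^ 2 * (p ^ 2 + k ^ 2) ^ 2) ∧
    (ρ < 2 * p ^ 2 - Real.sqrt (4 * p ^ 4 - p ^ 2 * (p ^ 2 + k ^ 2) ^ 2) →
      0 < dispT p k ρ ^ 2 - 4 * dispD p k ρ ∧ 0 < dispT p k ρ ∧ 0 < dispD p k ρ) ∧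
    (2 * p ^ 2 - Real.sqrt (4 * p ^ 4 - p ^ 2 * (p ^ 2 + k ^ 2) ^ 2) < ρ →
      ρ < 2 * p ^ 2 + Real.sqrt (4 * p ^ 4 - p ^ 2 * (p ^ 2 + k ^ 2) ^ 2) →
      dispT p k ρ ^ 2 - 4 * dispD p k ρ < 0) ∧
    (2 * p ^ 2 + Real.sqrt (4 * p ^ 4 - p ^ 2 * (p ^ 2 + k ^ 2) ^ 2) < ρ →
      0 < dispT p k ρ ^ 2 - 4 * dispD p k ρ ∧ dispT p k ρ < 0 ∧ 0 < dispD p k ρ) := by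
  have hq : 0 < p ^ 2 + k ^ 2 := by positivity
  have hq2 : p ^ 2 + k ^ 2 < 2 * p := by nlinarith
  have hb : 0 < (p ^ 2 + k ^ 2) ^ 2 / 4 := by positivity
  have hab : (p ^ 2 + k ^ 2) ^ 2 / 4 < p ^ 2 := by nlinarith
  have hrad : 4 * p ^ 4 - p ^ 2 * (p ^ 2 + k ^ 2) ^ 2
      = 4 * p ^ 2 * (p ^ 2 - (p ^ 2 + k ^ 2) ^ 2 / 4) := by ring
  rw [hrad]
  unfold dispT dispD
  generalize (p ^ 2 + k ^ 2) ^ 2 / 4 = b at *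
  have ha : 0 < p ^ 2 := by positivity
  generalize p ^ 2 = a at *
  have hR : 0 < 4 * a * (a - b) := mul_pos (by linarith) (by linarith)
  have hS : 0 < √(4 * a * (a - b)) := Real.sqrt_pos.2 hR
  have hSS : √(4 * a * (a - b)) ^ 2 = 4 * a * (a - b) := Real.sq_sqrt hR.le
  generalize √(4 * a * (a - b)) = S at *
  have hab' : 0 < a * b := mul_pos ha hb
  have hS2 : S < 2 * a := by nlinarith
  have hSab : a - b < S := by nlinarith [mul_pos ha (sub_pos.2 hab), mul_pos hb (sub_pos.2 hab)]
  have hdisc : (2 * (a + b - ρ)) ^ 2 - 4 * ((a - b) * (a - b + 2 * ρ))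
      = 4 * ((2 * a - S - ρ) * (2 * a + S - ρ)) := by linear_combination 4 * hSS
  have hD : 0 < (a - b) * (a - b + 2 * ρ) := mul_pos (by linarith) (by linarith)
  rw [hdisc]
  refine ⟨hR, by linarith, by linarith, fun h => ⟨?_, by linarith, hD⟩, fun h₁ h₂ => ?_,
    fun h => ⟨?_, by linarith, hD⟩⟩
  · have := mul_pos (sub_pos.2 h) (show 0 < 2 * a + S - ρ by linarith)
    linarith
  · have := mul_neg_of_neg_of_pos (sub_neg.2 h₁) (sub_pos.2 h₂)
    linarith
  · have := mul_pos_of_neg_of_neg (show 2 * a - S - ρ < 0 by linarith) (sub_neg.2 h)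
    linarith
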